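/- arXiv:1708.05136 — 2 statements merged into one kernel-verified Lean document; each statement's English description precedes it below -/
import Mathlib

section
/- Let H be a real Hilbert space and f : H → ℝ be μ-strongly convex with L-Lipschitz gradient ∇f (0 < μ ≤ L), and let κ = L/μ. Then the operator T := I − (2/(μ+L))∇f is (1 − 2/(κ+1))-Lipschitz; that is, ‖T(y) − T(x)‖ ≤ (1 − 2/(κ+1))·‖y − x‖ for all x, y ∈ H. -/
open scoped RealInnerProductSpace

section GradientInequalities

variable {H : Type*} [NormedAddCommGroup H] [InnerProductSpace ℝ H] [CompleteSpace H]

/-- The derivative of a function along a line, in terms of its gradient. -/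
lemma HasGradientAt.hasDerivAt_lineMap {f : H → ℝ} {p x y : H} {t : ℝ}
    (hf : HasGradientAt f p (AffineMap.lineMap x y t)) :
    HasDerivAt (fun s : ℝ => f (AffineMap.lineMap x y s)) ⟪p, y - x⟫ t := by
  simpa [Function.comp_def] using hf.hasFDerivAt.comp_hasDerivAt t AffineMap.hasDerivAt_lineMap

/-- A convex function lies above its tangent planes. -/
lemma ConvexOn.add_inner_gradient_le {f : H → ℝ} {p x : H} (hf : ConvexOn ℝ Set.univ f)
    (hp : HasGradientAt f p x) (y : H) : f x + ⟪p, y - x⟫ ≤ f y := by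
  have hd : HasDerivAt (fun s : ℝ => f (AffineMap.lineMap x y s)) ⟪p, y - x⟫ 0 :=
    HasGradientAt.hasDerivAt_lineMap (by simpa using hp)
  have hc : ConvexOn ℝ Set.univ (fun s : ℝ => f (AffineMap.lineMap x y s)) :=
    hf.comp_affineMap (AffineMap.lineMap x y)
  have h := hc.le_slope_of_hasDerivAt (Set.mem_univ 0) (Set.mem_univ 1) one_pos hd
  simp only [slope_def_field, AffineMap.lineMap_apply_one, AffineMap.lineMap_apply_zero] at h
  linarith

/-- The descent lemma, from a one-sided Lipschitz bound on the gradient. -/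
lemma le_add_inner_gradient_add_sq {f : H → ℝ} {g : H → H} {M : ℝ}
    (hg : ∀ x, HasGradientAt f (g x) x)
    (hM : ∀ x y, ⟪g y - g x, y - x⟫ ≤ M * ‖y - x‖ ^ 2) (x y : H) :
    f y ≤ f x + ⟪g x, y - x⟫ + M / 2 * ‖y - x‖ ^ 2 := by
  have hd (t : ℝ) : HasDerivAt
      (fun s : ℝ => f (AffineMap.lineMap x y s) - s * ⟪g x, y - x⟫ - M / 2 * ‖y - x‖ ^ 2 * s ^ 2)
      (⟪g (AffineMap.lineMap x y t), y - x⟫ - ⟪g x, y - x⟫ - M * ‖y - x‖ ^ 2 * t) t := by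
    refine (((hg _).hasDerivAt_lineMap.fun_sub
      ((hasDerivAt_id' t).mul_const ⟪g x, y - x⟫)).fun_sub
      ((hasDerivAt_pow 2 t).const_mul (M / 2 * ‖y - x‖ ^ 2))).congr_deriv ?_
    norm_num
    ring
  have hanti := antitoneOn_of_deriv_nonpos (convex_Icc (0 : ℝ) 1)
    (fun t _ => (hd t).continuousAt.continuousWithinAt)
    (fun t _ => (hd t).differentiableAt.differentiableWithinAt) (fun t ht => by
      rw [interior_Icc] at ht
      rw [(hd t).deriv]
      have h := hM x (AffineMap.lineMap x y t)
      rw [← vsub_eq_sub (AffineMap.lineMap x y t) x, AffineMap.lineMap_vsub_left, vsub_eq_sub,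
        inner_smul_right, norm_smul, mul_pow, Real.norm_eq_abs, sq_abs, inner_sub_left] at h
      refine nonpos_of_mul_nonpos_right ?_ ht.1
      linarith)
  have h := hanti (Set.left_mem_Icc.2 zero_le_one) (Set.right_mem_Icc.2 zero_le_one) zero_le_one
  simp only [AffineMap.lineMap_apply_one, AffineMap.lineMap_apply_zero] at h
  linarith

/-- Cocoercivity of the gradient of a convex function (Baillon–Haddad). -/
lemma ConvexOn.sq_norm_gradient_sub_le {f : H → ℝ} {g : H → H} {M : ℝ} (hM0 : 0 ≤ M)
    (hf : ConvexOn ℝ Set.univ f) (hg : ∀ x, HasGradientAt f (g x) x)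
    (hM : ∀ x y, ⟪g y - g x, y - x⟫ ≤ M * ‖y - x‖ ^ 2) (x y : H) :
    ‖g y - g x‖ ^ 2 ≤ M * ⟪g y - g x, y - x⟫ := by
  have key (t : ℝ) (x y : H) :
      f x + ⟪g x, y - x⟫ + (t - M / 2 * t ^ 2) * ‖g y - g x‖ ^ 2 ≤ f y := by
    have h₁ := hf.add_inner_gradient_le (hg x) (y - t • (g y - g x))
    have h₂ := le_add_inner_gradient_add_sq hg hM y (y - t • (g y - g x))
    have e₁ : y - t • (g y - g x) - x = (y - x) - t • (g y - g x) := by abel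
    have e₂ : y - t • (g y - g x) - y = -(t • (g y - g x)) := by abel
    have e₃ : ⟪g y, g y - g x⟫ - ⟪g x, g y - g x⟫ = ‖g y - g x‖ ^ 2 := by
      rw [← inner_sub_left, real_inner_self_eq_norm_sq]
    rw [e₁, inner_sub_right, inner_smul_right] at h₁
    rw [e₂, inner_neg_right, inner_smul_right, norm_neg, norm_smul, mul_pow, Real.norm_eq_abs,
      sq_abs] at h₂
    linear_combination h₁ + h₂ - t * e₃
  have hsum (t : ℝ) : (2 * t - M * t ^ 2) * ‖g y - g x‖ ^ 2 ≤ ⟪g y - g x, y - x⟫ := by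
    have h₁ := key t x y
    have h₂ := key t y x
    rw [norm_sub_rev, ← neg_sub y x, inner_neg_right] at h₂
    rw [inner_sub_left]
    linarith
  rcases hM0.eq_or_lt with rfl | hpos
  · have h := hM x y
    have h₁ := hsum 1
    linarith
  · have h := mul_le_mul_of_nonneg_left (hsum M⁻¹) hM0
    have e : M * ((2 * M⁻¹ - M * M⁻¹ ^ 2) * ‖g y - g x‖ ^ 2) = ‖g y - g x‖ ^ 2 := by
      field_simp
      ring
    rwa [e] at h

/-- Subtracting a quadratic from a function subtracts a multiple of the identity from its
gradient. -/
lemma HasGradientAt.sub_half_mul_norm_sq {f : H → ℝ} {p x : H} (hf : HasGradientAt f p x)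
    (c : ℝ) : HasGradientAt (fun z => f z - c / 2 * ‖z‖ ^ 2) (p - c • x) x := by
  rw [hasGradientAt_iff_hasFDerivAt] at hf ⊢
  refine (hf.fun_sub
    ((hasStrictFDerivAt_norm_sq x).hasFDerivAt.const_mul (c / 2))).congr_fderiv ?_
  ext z
  simp
  ring

end GradientInequalities

/-- if `f` is `μ`-strongly convex with `L`-Lipschitz gradient `g` and
`κ = L/μ`, then `T = I - (2/(μ+L))∇f` is `(1 - 2/(κ+1))`-Lipschitz. -/
theorem gradient_descent_operator_lipschitz
    {H : Type*} [NormedAddCommGroup H] [InnerProductSpace ℝ H] [CompleteSpace H]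
    (f : H → ℝ) (g : H → H) (μ L : ℝ) (hμ : 0 < μ) (hμL : μ ≤ L)
    (hgrad : ∀ x, HasGradientAt f (g x) x)
    (hstrong : ConvexOn ℝ Set.univ (fun x => f x - μ / 2 * ‖x‖ ^ 2))
    (hlip : ∀ x y, ‖g y - g x‖ ≤ L * ‖y - x‖) :
    ∀ x y : H,
      ‖(y - (2 / (μ + L)) • g y) - (x - (2 / (μ + L)) • g x)‖ ≤
        (1 - 2 / (L / μ + 1)) * ‖y - x‖ := by
  intro x y
  have hL : 0 < μ + L := by linarith
  have hq (z : H) := (hgrad z).sub_half_mul_norm_sq μ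
  have hM (x y : H) : inner ℝ ((g y - μ • y) - (g x - μ • x)) (y - x) ≤
      (L - μ) * ‖y - x‖ ^ 2 := by
    have e : (g y - μ • y) - (g x - μ • x) = (g y - g x) - μ • (y - x) := by module
    rw [e, inner_sub_left, real_inner_smul_left, real_inner_self_eq_norm_sq]
    nlinarith [real_inner_le_norm (g y - g x) (y - x),
      mul_le_mul_of_nonneg_right (hlip x y) (norm_nonneg (y - x))]
  have hco := hstrong.sq_norm_gradient_sub_le (sub_nonneg.2 hμL) hq hM x y
  set d := (g y - μ • y) - (g x - μ • x) with hd
  have e : (y - (2 / (μ + L)) • g y) - (x - (2 / (μ + L)) • g x) =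
      (μ + L)⁻¹ • ((L - μ) • (y - x) - (2 : ℝ) • d) := by
    rw [hd]
    match_scalars <;> field_simp <;> ring
  have hc : 1 - 2 / (L / μ + 1) = (μ + L)⁻¹ * (L - μ) := by
    have : L + μ ≠ 0 := by linarith
    field_simp
    ring
  rw [e, hc, norm_smul, Real.norm_of_nonneg (inv_nonneg.2 hL.le), mul_assoc]
  refine mul_le_mul_of_nonneg_left ?_ (inv_nonneg.2 hL.le)
  refine le_of_sq_le_sq ?_ (mul_nonneg (sub_nonneg.2 hμL) (norm_nonneg _))
  rw [norm_sub_sq_real, norm_smul, norm_smul, real_inner_smul_left, real_inner_smul_right,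
    real_inner_comm, mul_pow, mul_pow, mul_pow, Real.norm_eq_abs, sq_abs, Real.norm_two]
  linarith
end

section
/- (Asymptotic iteration complexity of ARock under stochastic delays.) Fix r ∈ (0,1) and ε ∈ (0,1), and for each m ∈ ℕ let a delay distribution with tail probabilities P_l(m) be given with moments M_1(m) := Σ_{l=1}^∞ P_l(m) ρ(m)^{−l/2} and M_2(m) := Σ_{l=1}^∞ P_l(m)^{1/2} ρ(m)^{−l/2} finite and satisfying M_1(m), M_2(m) = O(m^q) for some 0 ≤ q < 1/2, where ρ(m) = 1 − (1/m)(1 − r²). Set η_1(m) := (1 + m^{−1/2}((1 − r²)^{1/2} M_1(m) + 2 M_2(m)))^{−1} and η_2(m) := m^{1/2}(1 − r²)^{−1/2} M_1(m)^{−1}. Then the epoch iteration complexity I(ε, m), defined by R(η_1(m), η_2(m))^{I·m} = ε, satisfies I(ε, m) = (1 + 2 m^{−1/2}((1 − r²)^{1/2} M_1(m) + M_2(m)) + o(m^{−1/2+q}))·(1/(1 − r²))·ln(1/ε) as m → ∞; in particular I(ε, m) = (1 + O(m^{−1/2+q}))·(1/(1 − r²))·ln(1/ε), matching the ideal synchronous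 complexity asymptotically. -/
open Filter Asymptotics

/-- `ρ(m) = 1 - (1/m)(1-r²)`. -/
noncomputable def rhoF (r : ℝ) (m : ℕ) : ℝ := 1 - (1 / (m : ℝ)) * (1 - r ^ 2)

/-- The reciprocal of `-log (1 - x)` agrees with `1 / x` up to an error of at most `1`. -/
theorem abs_inv_neg_log_one_sub_sub_inv_le {x : ℝ} (hx0 : 0 < x) (hx1 : x < 1) :
    |(-Real.log (1 - x))⁻¹ - x⁻¹| ≤ 1 := by
  have hy : 0 < 1 - x := by linarith
  have hlow : x ≤ -Real.log (1 - x) := by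
    have := Real.log_le_sub_one_of_pos hy
    linarith
  have hup : -Real.log (1 - x) ≤ (x⁻¹ - 1)⁻¹ := by
    have h := Real.one_sub_inv_le_log_of_pos hy
    have e : (x⁻¹ - 1)⁻¹ = (1 - x)⁻¹ - 1 := by
      have : x⁻¹ - 1 = (1 - x) / x := by field_simp
      rw [this]
      field_simp
      ring
    linarith
  have h1 : (-Real.log (1 - x))⁻¹ ≤ x⁻¹ := inv_anti₀ hx0 hlow
  have h2 : x⁻¹ - 1 ≤ (-Real.log (1 - x))⁻¹ := by
    have := inv_anti₀ (hx0.trans_le hlow) hup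
    rwa [inv_inv] at this
  rw [abs_le]
  constructor <;> linarith

/-- Non-asymptotic form of the complexity expansion: `a` and `b` stand for the rescaled moments,
`c` for `1 - r ^ 2` and `η` for the step size. -/
theorem abs_complexity_sub_le {c n a b ε η : ℝ} (hc0 : 0 < c) (hc1 : c < 1) (hn : 4 ≤ n)
    (ha : |a| ≤ 1 / 8) (hb : |b| ≤ 1 / 8) (hε0 : 0 < ε) (hε1 : ε < 1)
    (hη : η = (1 + (a + 2 * b))⁻¹) :
    |Real.log ε / (n * Real.log (1 - η / n * c * (1 - η * a))) -
        (1 + 2 * (a + b)) * (1 / c) * Real.log (1 / ε)|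
      ≤ Real.log (1 / ε) * (n⁻¹ + 2 / c * a ^ 2) := by
  rw [abs_le] at ha hb
  have hL : 0 < Real.log (1 / ε) := Real.log_pos (by rw [lt_div_iff₀ hε0]; linarith)
  have hLε : Real.log ε = -Real.log (1 / ε) := by simp
  have hn0 : 0 < n := by linarith
  have hu : 0 < 1 + 2 * b := by linarith
  have hv : 5 / 8 ≤ 1 + (a + 2 * b) := by linarith
  have hv0 : 0 < 1 + (a + 2 * b) := by linarith
  obtain ⟨x, hx⟩ : ∃ x, x = η / n * c * (1 - η * a) := ⟨_, rfl⟩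
  have hxe : x = c * (1 + 2 * b) / (n * (1 + (a + 2 * b)) ^ 2) := by
    rw [hx, hη]
    field_simp
    ring
  have hx0 : 0 < x := by rw [hxe]; positivity
  have hx1 : x < 1 := by
    rw [hxe, div_lt_one (by positivity)]
    nlinarith
  have hlog := abs_inv_neg_log_one_sub_sub_inv_le hx0 hx1
  have hxi : n⁻¹ * x⁻¹ = (1 + 2 * (a + b)) * (1 / c) + a ^ 2 / (c * (1 + 2 * b)) := by
    rw [hxe]
    field_simp
    ring
  rw [← hx, hLε]
  have hsplit : -Real.log (1 / ε) / (n * Real.log (1 - x)) -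
        (1 + 2 * (a + b)) * (1 / c) * Real.log (1 / ε) =
      Real.log (1 / ε) *
        (n⁻¹ * ((-Real.log (1 - x))⁻¹ - x⁻¹) + a ^ 2 / (c * (1 + 2 * b))) := by
    rw [mul_sub, hxi, inv_neg, div_eq_mul_inv, mul_inv]
    ring
  rw [hsplit, abs_mul, abs_of_pos hL]
  refine mul_le_mul_of_nonneg_left ((abs_add_le _ _).trans (add_le_add ?_ ?_)) hL.le
  · rw [abs_mul, abs_of_pos (inv_pos.2 hn0)]
    exact mul_le_of_le_one_right (inv_pos.2 hn0).le hlog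
  · rw [abs_of_nonneg (by positivity), div_mul_eq_mul_div, div_le_div_iff₀ (by positivity) hc0]
    nlinarith [mul_nonneg hc0.le (sq_nonneg a)]

/-- asymptotic epoch iteration complexity of ARock under stochastic
delays.  For each `m`, the delay distribution has tail probabilities `P m l`, moments
`M₁(m) = Σ_l P_l ρ^{-l/2}`, `M₂(m) = Σ_l P_l^{1/2} ρ^{-l/2}` that are finite and
`O(m^q)` for some `0 ≤ q < 1/2`.  With `η₁(m) = (1 + m^{-1/2}((1-r²)^{1/2}M₁ + 2M₂))⁻¹`
and `η₂(m) = m^{1/2}(1-r²)^{-1/2}M₁⁻¹`, the epoch iteration complexity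
`I(ε,m) = ln(ε)/(m·ln R(η₁(m),η₂(m)))` satisfies
`I(ε,m) = (1 + 2m^{-1/2}((1-r²)^{1/2}M₁(m) + M₂(m)) + o(m^{-1/2+q}))·(1/(1-r²))·ln(1/ε)`;
in particular `I(ε,m) = (1 + O(m^{-1/2+q}))·(1/(1-r²))·ln(1/ε)`. -/
theorem ARock_asymptotic_complexity_stochastic
    (r : ℝ) (hr0 : 0 < r) (hr1 : r < 1)
    (ε : ℝ) (hε0 : 0 < ε) (hε1 : ε < 1)
    (q : ℝ) (hq0 : 0 ≤ q) (hq1 : q < 1 / 2)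
    (P : ℕ → ℕ → ℝ)
    (hP0 : ∀ m l, 0 ≤ P m l) (hP1 : ∀ m l, P m l ≤ 1) (hPanti : ∀ m, Antitone (P m))
    (hM₁sum : ∀ m : ℕ,
      Summable fun l : ℕ => P m (l + 1) * (rhoF r m) ^ (-(((l : ℝ) + 1) / 2)))
    (hM₂sum : ∀ m : ℕ,
      Summable fun l : ℕ => (P m (l + 1)) ^ ((1 : ℝ) / 2) * (rhoF r m) ^ (-(((l : ℝ) + 1) / 2)))
    (M₁ : ℕ → ℝ)
    (hM₁ : ∀ m : ℕ, M₁ m = ∑' l : ℕ, P m (l + 1) * (rhoF r m) ^ (-(((l : ℝ) + 1) / 2)))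
    (M₂ : ℕ → ℝ)
    (hM₂ : ∀ m : ℕ, M₂ m = ∑' l : ℕ,
      (P m (l + 1)) ^ ((1 : ℝ) / 2) * (rhoF r m) ^ (-(((l : ℝ) + 1) / 2)))
    (hM₁O : M₁ =O[atTop] fun m : ℕ => (m : ℝ) ^ q)
    (hM₂O : M₂ =O[atTop] fun m : ℕ => (m : ℝ) ^ q)
    (η₁ : ℕ → ℝ)
    (hη₁ : ∀ m : ℕ, η₁ m =
      (1 + ((m : ℝ) ^ (-(1 : ℝ) / 2)) * (Real.sqrt (1 - r ^ 2) * M₁ m + 2 * M₂ m))⁻¹)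
    (η₂ : ℕ → ℝ)
    (hη₂ : ∀ m : ℕ, η₂ m = Real.sqrt m * (Real.sqrt (1 - r ^ 2))⁻¹ * (M₁ m)⁻¹)
    (I : ℕ → ℝ)
    (hI : ∀ m : ℕ, I m = Real.log ε /
      ((m : ℝ) * Real.log (1 - (η₁ m / (m : ℝ)) * (1 - r ^ 2) * (1 - η₁ m / η₂ m)))) :
    ((fun m : ℕ =>
        I m - (1 + 2 * ((m : ℝ) ^ (-(1 : ℝ) / 2)) *
            (Real.sqrt (1 - r ^ 2) * M₁ m + M₂ m)) * (1 / (1 - r ^ 2)) * Real.log (1 / ε))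
      =o[atTop] fun m : ℕ => (m : ℝ) ^ (-(1 : ℝ) / 2 + q)) ∧
    ((fun m : ℕ => I m - (1 / (1 - r ^ 2)) * Real.log (1 / ε))
      =O[atTop] fun m : ℕ => (m : ℝ) ^ (-(1 : ℝ) / 2 + q)) := by
  have hc0 : 0 < 1 - r ^ 2 := by nlinarith
  have hc1 : 1 - r ^ 2 < 1 := by nlinarith
  obtain ⟨a, ha⟩ : ∃ a : ℕ → ℝ, a = fun m : ℕ =>
      (m : ℝ) ^ (-(1 : ℝ) / 2) * (Real.sqrt (1 - r ^ 2) * M₁ m) := ⟨_, rfl⟩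
  obtain ⟨b, hb⟩ : ∃ b : ℕ → ℝ, b = fun m : ℕ => (m : ℝ) ^ (-(1 : ℝ) / 2) * M₂ m := ⟨_, rfl⟩
  obtain ⟨g, hg⟩ : ∃ g : ℕ → ℝ, g = fun m : ℕ => (m : ℝ) ^ (-(1 : ℝ) / 2 + q) := ⟨_, rfl⟩
  have hgmul : (fun m : ℕ => (m : ℝ) ^ (-(1 : ℝ) / 2) * (m : ℝ) ^ q) =ᶠ[atTop] g := by
    filter_upwards [eventually_gt_atTop 0] with m hm
    simp only [hg]
    rw [Real.rpow_add (by exact_mod_cast hm)]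
  have haO : a =O[atTop] g := by
    rw [ha]
    exact ((isBigO_refl _ _).mul (hM₁O.const_mul_left _)).trans_eventuallyEq hgmul
  have hbO : b =O[atTop] g := by
    rw [hb]
    exact ((isBigO_refl _ _).mul hM₂O).trans_eventuallyEq hgmul
  have hg0 : Tendsto g atTop (nhds 0) := by
    have h := (tendsto_rpow_neg_atTop (y := 1 / 2 - q) (by linarith)).comp
      (tendsto_natCast_atTop_atTop (R := ℝ))
    rw [hg]
    convert h using 2 with m
    simp only [Function.comp_apply]
    congr 1
    ring
  have hinv : (fun m : ℕ => (m : ℝ)⁻¹) =o[atTop] g := by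
    have h0 := ((tendsto_rpow_neg_atTop (y := 1 / 2 + q) (by linarith)).comp
      (tendsto_natCast_atTop_atTop (R := ℝ)))
    have h := ((isLittleO_one_iff ℝ).2 h0).mul_isBigO (isBigO_refl g atTop)
    refine h.congr' ?_ (by simp)
    filter_upwards [eventually_gt_atTop 0] with m hm
    simp only [hg, Function.comp_apply]
    rw [← Real.rpow_add (by exact_mod_cast hm), ← Real.rpow_neg_one]
    congr 1
    ring
  have hsq : (fun m => a m ^ 2) =o[atTop] g := by
    have h := haO.mul_isLittleO (haO.trans_isLittleO
      ((isLittleO_one_iff ℝ).2 hg0))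
    simpa [pow_two] using h
  have hsmall : ∀ {f : ℕ → ℝ}, f =O[atTop] g → ∀ᶠ m in atTop, |f m| ≤ 1 / 8 := fun hf => by
    have h := (hf.trans_tendsto hg0).abs
    rw [abs_zero] at h
    exact h.eventually_le_const (by norm_num)
  have hmain : (fun m : ℕ =>
        I m - (1 + 2 * ((m : ℝ) ^ (-(1 : ℝ) / 2)) *
            (Real.sqrt (1 - r ^ 2) * M₁ m + M₂ m)) * (1 / (1 - r ^ 2)) * Real.log (1 / ε))
      =o[atTop] g := by
    refine IsBigO.trans_isLittleO (IsBigO.of_bound' ?_)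
      ((hinv.add (hsq.const_mul_left (2 / (1 - r ^ 2)))).const_mul_left (Real.log (1 / ε)))
    filter_upwards [hsmall haO, hsmall hbO, eventually_ge_atTop 4] with m hma hmb hm
    have hη : η₁ m = (1 + (a m + 2 * b m))⁻¹ := by
      rw [hη₁, ha, hb]
      congr 2
      ring
    have hdiv : η₁ m / η₂ m = η₁ m * a m := by
      simp only [ha]
      rw [div_eq_mul_inv, hη₂, mul_inv, mul_inv, inv_inv, inv_inv, neg_div,
        Real.rpow_neg (Nat.cast_nonneg m), ← Real.sqrt_eq_rpow]
      ring
    have h := abs_complexity_sub_le hc0 hc1 (by exact_mod_cast hm : (4 : ℝ) ≤ m) hma hmb hε0 hε1 hη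
    rw [← hdiv, ← hI] at h
    have hsum : 2 * (m : ℝ) ^ (-(1 : ℝ) / 2) * (Real.sqrt (1 - r ^ 2) * M₁ m + M₂ m) =
        2 * (a m + b m) := by
      rw [ha, hb]
      ring
    rw [hsum, Real.norm_eq_abs]
    exact h.trans (le_abs_self _)
  rw [← hg]
  refine ⟨hmain, ?_⟩
  have h := hmain.isBigO.add
    ((haO.add hbO).const_mul_left (2 * (1 / (1 - r ^ 2)) * Real.log (1 / ε)))
  refine h.congr_left fun m => ?_
  rw [ha, hb]
  ring
end
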